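/- Let γ ∈ [0,1), let S be a nonempty type, let ĝ : S → ℝ be bounded, and let F : S → S. Then there exists exactly one bounded function V : S → ℝ satisfying the discounted reachability Bellman equation V(s) = (1-γ)·ĝ(s) + γ·min(ĝ(s), V(F(s))) for all s ∈ S. -/

import Mathlib

/-! With respect to the supremum extended distance the Bellman operator is Lipschitz with constant
`|γ| < 1`, because `min a` is nonexpansive. Bounded functions are those at finite distance from any
one constant function. The operator sends the constant function of any upper bound of the goal
function to the goal function itself, so the Banach fixed point theorem, applied at that constant,
yields exactly one fixed point among the bounded functions. -/

open Function UniformFun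
open scoped UniformConvergence NNReal ENNReal

theorem existsUnique_edist_ne_top_and_isFixedPt {X : Type*} [EMetricSpace X] [CompleteSpace X]
    {K : ℝ≥0} {f : X → X} (hf : ContractingWith K f) {x : X} (hx : edist x (f x) ≠ ∞) :
    ∃! y, edist x y ≠ ∞ ∧ IsFixedPt f y := by
  have hxy : edist x (ContractingWith.efixedPoint f hf x hx) ≠ ∞ :=
    (hf.edist_efixedPoint_lt_top hx).ne
  have hfix : IsFixedPt f (ContractingWith.efixedPoint f hf x hx) :=
    hf.efixedPoint_isFixedPt hx
  refine ⟨_, ⟨hxy, hfix⟩, fun z ⟨hxz, hz⟩ ↦ ?_⟩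
  have hzy : edist z (ContractingWith.efixedPoint f hf x hx) ≠ ∞ :=
    ne_top_of_le_ne_top (ENNReal.add_ne_top.2 ⟨hxz, hxy⟩) (edist_triangle_left _ _ x)
  exact (hf.eq_or_edist_eq_top_of_fixedPoints hz hfix).resolve_right hzy

theorem uniformFun_edist_ne_top_iff {S E : Type*} [PseudoMetricSpace E] {V W : S →ᵤ E} :
    edist V W ≠ ∞ ↔ ∃ C : ℝ, ∀ s, dist (toFun V s) (toFun W s) ≤ C := by
  constructor
  · intro h
    refine ⟨(edist V W).toReal, fun s ↦ ?_⟩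
    rw [dist_edist]
    exact ENNReal.toReal_mono h edist_eval_le
  · rintro ⟨C, hC⟩
    refine ne_top_of_le_ne_top (ENNReal.ofReal_ne_top (r := C)) (UniformFun.edist_le.2 fun s ↦ ?_)
    rw [edist_dist]
    exact ENNReal.ofReal_le_ofReal (hC s)

theorem uniformFun_edist_const_ne_top_iff {S E : Type*} [SeminormedAddCommGroup E] (c : E)
    (V : S → E) :
    edist (ofFun fun _ ↦ c) (ofFun V) ≠ ∞ ↔ ∃ M : ℝ, ∀ s, ‖V s‖ ≤ M := by
  rw [uniformFun_edist_ne_top_iff]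
  constructor
  · rintro ⟨C, hC⟩
    exact ⟨‖c‖ + C, fun s ↦ norm_le_norm_add_const_of_dist_le (dist_comm c (V s) ▸ hC s)⟩
  · rintro ⟨M, hM⟩
    exact ⟨‖c‖ + M, fun s ↦ (dist_le_norm_add_norm c (V s)).trans (by gcongr; exact hM s)⟩

theorem lipschitzWith_const_add_mul_min {X : Type*} [PseudoEMetricSpace X] {K : ℝ≥0} {f : X → ℝ}
    (hf : LipschitzWith K f) (γ a b : ℝ) :
    LipschitzWith (‖γ‖₊ * K) fun x ↦ b + γ * min a (f x) := by
  have hmul : LipschitzWith (‖γ‖₊ * K) fun x ↦ γ * min a (f x) :=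
    (lipschitzWith_smul γ).comp (hf.const_min a)
  simpa only [zero_add] using (LipschitzWith.const b).add hmul

section DiscountedBellman

variable {S : Type*} {γ : ℝ} {g : S → ℝ} {F : S → S}

/-- The discounted reachability Bellman operator for the goal function `g` and the transition map
`F`. It acts on `S →ᵤ ℝ`, the type of all functions with the supremum extended distance. -/
def discountedBellman (γ : ℝ) (g : S → ℝ) (F : S → S) (V : S →ᵤ ℝ) : S →ᵤ ℝ :=
  ofFun fun s ↦ (1 - γ) * g s + γ * min (g s) (toFun V (F s))

theorem contractingWith_discountedBellman (hγ : |γ| < 1) :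
    ContractingWith ‖γ‖₊ (discountedBellman γ g F) := by
  refine ⟨by exact_mod_cast hγ, lipschitzWith_ofFun_iff.2 fun s ↦ ?_⟩
  rw [← mul_one ‖γ‖₊]
  exact lipschitzWith_const_add_mul_min (lipschitzWith_eval (F s)) γ (g s) _

theorem discountedBellman_const_of_le {M : ℝ} (hM : ∀ s, g s ≤ M) :
    discountedBellman γ g F (ofFun fun _ ↦ M) = ofFun g := by
  refine congrArg ofFun (funext fun s ↦ ?_)
  rw [toFun_ofFun, min_eq_left (hM s)]
  ring

theorem isFixedPt_discountedBellman_iff {V : S → ℝ} :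
    IsFixedPt (discountedBellman γ g F) (ofFun V) ↔
      ∀ s, V s = (1 - γ) * g s + γ * min (g s) (V (F s)) :=
  eq_comm.trans funext_iff

end DiscountedBellman

theorem discounted_bellman_unique_bounded_fixed_point_general
    {S : Type*} {γ : ℝ} (hγ : |γ| < 1) {g : S → ℝ} (hg : ∃ M : ℝ, ∀ s, |g s| ≤ M) (F : S → S) :
    ∃! V : S → ℝ, (∃ M : ℝ, ∀ s, |V s| ≤ M) ∧
      ∀ s, V s = (1 - γ) * g s + γ * min (g s) (V (F s)) := by
  obtain ⟨M, hM⟩ := hg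
  have hTM : discountedBellman γ g F (ofFun fun _ ↦ M) = ofFun g :=
    discountedBellman_const_of_le fun s ↦ le_of_abs_le (hM s)
  have hdist : edist (ofFun fun _ ↦ M) (discountedBellman γ g F (ofFun fun _ ↦ M)) ≠ ∞ := by
    rw [hTM]
    exact (uniformFun_edist_const_ne_top_iff M g).2 ⟨M, hM⟩
  refine (ofFun.existsUnique_congr fun V ↦ ?_).2
    (existsUnique_edist_ne_top_and_isFixedPt (contractingWith_discountedBellman hγ) hdist)
  have hbounded : (∃ K : ℝ, ∀ s, |V s| ≤ K) ↔ edist (ofFun fun _ ↦ M) (ofFun V) ≠ ∞ :=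
    (uniformFun_edist_const_ne_top_iff M V).symm
  exact and_congr hbounded isFixedPt_discountedBellman_iff.symm

/-- For `γ ∈ [0,1)`, a nonempty state space `S`, a bounded augmented goal
function `gAug : S → ℝ` and a transition map `F : S → S`, there exists exactly
one bounded function `V : S → ℝ` satisfying the discounted reachability Bellman
equation `V s = (1-γ) * gAug s + γ * min (gAug s) (V (F s))` for all `s`. -/
theorem discounted_bellman_unique_bounded_fixed_point
    {S : Type*} [Nonempty S] (γ : ℝ) (hγ0 : 0 ≤ γ) (hγ1 : γ < 1)
    (gAug : S → ℝ) (hg : ∃ M : ℝ, ∀ s, |gAug s| ≤ M) (F : S → S) :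
    ∃! V : S → ℝ, (∃ M : ℝ, ∀ s, |V s| ≤ M) ∧
      ∀ s, V s = (1 - γ) * gAug s + γ * min (gAug s) (V (F s)) :=
  discounted_bellman_unique_bounded_fixed_point_general (abs_lt.2 ⟨by linarith, hγ1⟩) hg F
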